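/- With φ the map induced by the odd reflection at the odd simple root α_{i+1}, the odd Serre relations are preserved: [[φ(x^±_{β_{t−1},0}), φ(x^±_{β_t,0})], [φ(x^±_{β_t,0}), φ(x^±_{β_{t+1},0})]] = 0 in ŝl(m|n,Π) for every odd simple root β_t of Π₁; in particular [[[x^±_{α_i,0},x^±_{α_{i+1},0}], x^∓_{α_{i+1},0}], [x^∓_{α_{i+1},0}, [x^±_{α_{i+1},0},x^±_{α_{i+2},0}]]] = 0 and [[x^±_{α_{i−1},0}, [x^±_{α_i,0},x^±_{α_{i+1},0}]], [[x^±_{α_i,0},x^±_{α_{i+1},0}], x^∓_{α_{i+1},0}]] = 0. -/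

import Mathlib

/-!
Common framework for formalizing statements about affine super Yangians
`Y_ℏ(ŝl(m|n,Π))` attached to a simple root system `Π` of the affine
Kac–Moody superalgebra `ŝl(m|n)` of type `A^{(1)}(m−1|n−1)`.
-/

noncomputable section

namespace ASY

open scoped TensorProduct

/-- The ground ring `ℂ[ℏ]`. -/
abbrev R : Type := Polynomial ℂ

/-- The formal deformation parameter `ℏ`. -/
def hbar : R := Polynomial.X

/-- `1/2` as an element of `ℂ[ℏ]`. -/
def half : R := Polynomial.C (1/2 : ℂ)

/-- The sign `(−1)^{p(a)p(b)}` attached to parities `pa`, `pb`. -/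
def sg (pa pb : Bool) : R := if pa && pb then -1 else 1

section SuperOps

variable {Y : Type*} [Ring Y] [Algebra R Y]

/-- The supercommutator `[a,b] = ab − (−1)^{p(a)p(b)} ba` of homogeneous elements of
parities `pa` and `pb`. -/
def sbr (pa pb : Bool) (x y : Y) : Y := x * y - sg pa pb • (y * x)

/-- The super anticommutator `{a,b} = ab + (−1)^{p(a)p(b)} ba`. -/
def sac (pa pb : Bool) (x y : Y) : Y := x * y + sg pa pb • (y * x)

/-- Iterated super-adjoint action `(ad x)^k y` for `x` of parity `pa` and `y` of parity `pb`. -/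
def adN (pa pb : Bool) (x : Y) : ℕ → Y → Y
  | 0, y => y
  | k + 1, y => sbr pa (xor pb (pa && decide (k % 2 = 1))) x (adN pa pb x k y)

/-- Iterated super-bracket `[x₁,[x₂,…,[x_k, y]…]]`, all `xᵢ` of parity `pa`, `y` of parity `pb`. -/
def adSeq (pa pb : Bool) : List Y → Y → Y
  | [], y => y
  | x :: l, y => sbr pa (xor pb (pa && decide (l.length % 2 = 1))) x (adSeq pa pb l y)

end SuperOps

/-- A simple root system `Π` of the affine Kac–Moody superalgebra `ŝl(m|n)`
(type `A^{(1)}(m−1|n−1)`): a cyclic arrangement of the `m + n` weights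
`ε₁,…,ε_m, δ₁,…,δ_n`, recorded by the type of the weight at each position
(`false` = an `ε`-weight of norm `+1`, `true` = a `δ`-weight of norm `−1`);
the simple roots are `α_i = e_i − e_{i+1}` (indices mod `m+n`). -/
structure SimpleRootSystem (m n : ℕ) : Type where
  /-- the type of the weight at each position -/
  τ : Fin (m + n) → Bool
  /-- there are exactly `n` weights of `δ`-type -/
  card_delta : (Finset.univ.filter fun k => τ k = true).card = n

namespace SimpleRootSystem

variable {m n : ℕ}

/-- The norm `(e_k, e_k) = ±1` of the `k`-th weight. -/
def w (P : SimpleRootSystem m n) (k : Fin (m + n)) : ℤ := if P.τ k then -1 else 1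

variable [NeZero (m + n)]

/-- The coefficient of `e_k` in the simple root `α_i = e_i − e_{i+1}`. -/
def coeffα (i k : Fin (m + n)) : ℤ := (if k = i then 1 else 0) - (if k = i + 1 then 1 else 0)

/-- The (symmetric) Cartan matrix `a_{ij} = (α_i, α_j)` of `Π`. -/
def a (P : SimpleRootSystem m n) (i j : Fin (m + n)) : ℤ :=
  ∑ k, P.w k * coeffα i k * coeffα j k

/-- The parity of the simple root `α_i` (`true` iff `α_i` is odd, iff `a_{ii} = 0`). -/
def par (P : SimpleRootSystem m n) (i : Fin (m + n)) : Bool := P.τ i != P.τ (i + 1)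

/-- The reflection `s_{α_i}` on simple root systems: on the weight arrangement it
swaps the weights at positions `i` and `i+1`.  For `α_i` even it preserves `Π`;
for `α_i` odd it is the odd reflection `Π ↦ Π₁`. -/
def reflect (P : SimpleRootSystem m n) (i : Fin (m + n)) : SimpleRootSystem m n where
  τ := P.τ ∘ Equiv.swap i (i + 1)
  card_delta := by
    have h1 : (Finset.univ.filter fun k => (P.τ ∘ Equiv.swap i (i + 1)) k = true).card
        = (Finset.univ.filter fun k => P.τ k = true).card :=
      Finset.card_equiv (Equiv.swap i (i + 1)) (fun k => by simp)
    rw [h1, P.card_delta]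

/-- Applying a word of simple reflections to a simple root system. -/
def applyWord (P : SimpleRootSystem m n) : List (Fin (m + n)) → SimpleRootSystem m n
  | [] => P
  | c :: l => applyWord (P.reflect c) l

/-- The word consists of even reflections at every stage (i.e. it represents an
element of the Weyl group, generated by even reflections). -/
def IsEvenWord (P : SimpleRootSystem m n) : List (Fin (m + n)) → Prop
  | [] => True
  | c :: l => P.par c = false ∧ IsEvenWord (P.reflect c) l

end SimpleRootSystem

end ASY

namespace ASY

/-- Chevalley generators `x^±_i`, `h_i` of the affine Kac–Moody superalgebra `ŝl(m|n,Π)`. -/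
inductive KGen (N : ℕ) : Type
  | xp (i : Fin N)
  | xm (i : Fin N)
  | h (i : Fin N)

/-- The free algebra on the Chevalley generators. -/
abbrev KFree (m n : ℕ) : Type := FreeAlgebra R (KGen (m + n))

section KMDefs

variable {m n : ℕ}

/-- `x^+_i` in the free algebra. -/
def KXp (i : Fin (m + n)) : KFree m n := FreeAlgebra.ι R (KGen.xp i)

/-- `x^−_i` in the free algebra. -/
def KXm (i : Fin (m + n)) : KFree m n := FreeAlgebra.ι R (KGen.xm i)

/-- `h_i` in the free algebra. -/
def KH (i : Fin (m + n)) : KFree m n := FreeAlgebra.ι R (KGen.h i)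

variable [NeZero (m + n)]

/-- The defining relations of (the universal enveloping superalgebra of) the affine
Kac–Moody superalgebra `ŝl(m|n,Π)` with Chevalley generators `x^±_i`, `h_i`. -/
inductive KRel (P : SimpleRootSystem m n) : KFree m n → KFree m n → Prop
  /-- `[h_i, h_j] = 0` -/
  | hh (i j : Fin (m + n)) : KRel P (sbr false false (KH i) (KH j)) 0
  /-- `[h_i, x^+_j] = a_{ij} x^+_j` -/
  | hxp (i j : Fin (m + n)) :
      KRel P (sbr false (P.par j) (KH i) (KXp j)) (((P.a i j : ℤ) : R) • KXp j)
  /-- `[h_i, x^−_j] = −a_{ij} x^−_j` -/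
  | hxm (i j : Fin (m + n)) :
      KRel P (sbr false (P.par j) (KH i) (KXm j)) ((-(P.a i j : ℤ) : R) • KXm j)
  /-- `[x^+_i, x^−_j] = δ_{ij} h_i` -/
  | pm (i j : Fin (m + n)) :
      KRel P (sbr (P.par i) (P.par j) (KXp i) (KXm j)) (if i = j then KH i else 0)
  /-- Serre relation `(ad x^+_i)^{1+|a_{ij}|}(x^+_j) = 0` for `i ≠ j` -/
  | serrep (i j : Fin (m + n)) (hij : i ≠ j) :
      KRel P (adN (P.par i) (P.par j) (KXp i) (1 + (P.a i j).natAbs) (KXp j)) 0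
  /-- Serre relation `(ad x^−_i)^{1+|a_{ij}|}(x^−_j) = 0` for `i ≠ j` -/
  | serrem (i j : Fin (m + n)) (hij : i ≠ j) :
      KRel P (adN (P.par i) (P.par j) (KXm i) (1 + (P.a i j).natAbs) (KXm j)) 0
  /-- `[x^+_t, x^+_t] = 0` for `α_t` odd -/
  | oddp (t : Fin (m + n)) (ht : P.par t = true) : KRel P (sbr true true (KXp t) (KXp t)) 0
  /-- `[x^−_t, x^−_t] = 0` for `α_t` odd -/
  | oddm (t : Fin (m + n)) (ht : P.par t = true) : KRel P (sbr true true (KXm t) (KXm t)) 0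
  /-- `[[x^+_{t−1},x^+_t],[x^+_t,x^+_{t+1}]] = 0` for `α_t` odd -/
  | oddSp (t : Fin (m + n)) (ht : P.par t = true) :
      KRel P (sbr (xor (P.par (t - 1)) true) (xor true (P.par (t + 1)))
        (sbr (P.par (t - 1)) true (KXp (t - 1)) (KXp t))
        (sbr true (P.par (t + 1)) (KXp t) (KXp (t + 1)))) 0
  /-- `[[x^−_{t−1},x^−_t],[x^−_t,x^−_{t+1}]] = 0` for `α_t` odd -/
  | oddSm (t : Fin (m + n)) (ht : P.par t = true) :
      KRel P (sbr (xor (P.par (t - 1)) true) (xor true (P.par (t + 1)))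
        (sbr (P.par (t - 1)) true (KXm (t - 1)) (KXm t))
        (sbr true (P.par (t + 1)) (KXm t) (KXm (t + 1)))) 0

/-- (The universal enveloping superalgebra of) the affine Kac–Moody superalgebra
`ŝl(m|n,Π)`, presented by the Chevalley generators and relations. -/
abbrev KM (P : SimpleRootSystem m n) : Type := RingQuot (KRel P)

/-- Projection onto `ŝl(m|n,Π)`. -/
def mkK (P : SimpleRootSystem m n) : KFree m n →ₐ[R] KM P := RingQuot.mkAlgHom R (KRel P)

/-- Chevalley generator `x^+_i` of `ŝl(m|n,Π)`. -/
def kxp (P : SimpleRootSystem m n) (i : Fin (m + n)) : KM P := mkK P (KXp i)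

/-- Chevalley generator `x^−_i` of `ŝl(m|n,Π)`. -/
def kxm (P : SimpleRootSystem m n) (i : Fin (m + n)) : KM P := mkK P (KXm i)

/-- Chevalley generator `h_i` of `ŝl(m|n,Π)`. -/
def kh (P : SimpleRootSystem m n) (i : Fin (m + n)) : KM P := mkK P (KH i)

/-- The image under `φ` (the map induced by the odd reflection at the odd simple root `α_c`)
of the Cartan generator `h_{β_j}` of `ŝl(m|n,Π₁)` inside `ŝl(m|n,Π)`. -/
def phiH (P : SimpleRootSystem m n) (c j : Fin (m + n)) : KM P :=
  if j = c then -(kh P c)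
  else if j = c - 1 then kh P (c - 1) + kh P c
  else if j = c + 1 then kh P (c + 1) + kh P c
  else kh P j

/-- The image under `φ` of the generator `x^+_{β_j}` of `ŝl(m|n,Π₁)` inside `ŝl(m|n,Π)`. -/
def phiXp (P : SimpleRootSystem m n) (c j : Fin (m + n)) : KM P :=
  if j = c then kxm P c
  else if j = c - 1 then sbr (P.par (c - 1)) true (kxp P (c - 1)) (kxp P c)
  else if j = c + 1 then sbr (P.par (c + 1)) true (kxp P (c + 1)) (kxp P c)
  else kxp P j

/-- The image under `φ` of the generator `x^−_{β_j}` of `ŝl(m|n,Π₁)` inside `ŝl(m|n,Π)`. -/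
def phiXm (P : SimpleRootSystem m n) (c j : Fin (m + n)) : KM P :=
  if j = c then kxp P c
  else if j = c - 1 then -(sbr (P.par (c - 1)) true (kxm P (c - 1)) (kxm P c))
  else if j = c + 1 then -(sbr (P.par (c + 1)) true (kxm P (c + 1)) (kxm P c))
  else kxm P j

end KMDefs

end ASY

namespace ASY

/-!
The element `[x_c^±, x_c^∓] = ±h_c` acts on every `x_i^±` by a scalar, and `[x_i^±, x_c^∓] = 0` for
`i ≠ c`, so that `[[x_i^±, x_c^±], x_c^∓]` is a scalar multiple of `x_i^±`.
The odd Serre relation `[[x_{t-1}, x_t], [x_t, x_{t+1}]] = 0` holds at even nodes `t` too, by the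
ordinary Serre relations, so parities need not be followed through the reflection.
The Dynkin diagram is a cycle of at least five nodes, without triangles and squares, which leaves
four positions of `t`. If `t = c`, the relation reduces to `[x_{c-1}, x_{c+1}] = 0`; if `t` is
adjacent to `c`, it reduces to `[[x_f, [x_t, x_c]], x_t] = 0` with `f` the other neighbour of `t`, a
consequence of the odd Serre relation at `t`; if `t` and `c` have a common neighbour, the relation
at `t` is bracketed with `x_c`, which commutes with the rest; otherwise `φ` changes nothing.
-/

section Superbracket

variable {Y : Type*} [Ring Y] [Algebra R Y]

lemma eq_zero_of_add_self_eq_zero {y : Y} (h : y + y = 0) : y = 0 := by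
  have h2 : IsUnit (Polynomial.C 2 : R) := Polynomial.isUnit_C.2 (IsUnit.mk0 2 two_ne_zero)
  rwa [← two_smul R, ← map_ofNat Polynomial.C, h2.smul_eq_zero] at h

lemma sbr_smul_left (p q : Bool) (s : R) (x y : Y) : sbr p q (s • x) y = s • sbr p q x y := by
  simp only [sbr, smul_sub, smul_mul_assoc, mul_smul_comm, smul_comm s]

lemma sbr_smul_right (p q : Bool) (s : R) (x y : Y) : sbr p q x (s • y) = s • sbr p q x y := by
  simp only [sbr, smul_sub, smul_mul_assoc, mul_smul_comm, smul_comm s]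

lemma sbr_zero_left (p q : Bool) (y : Y) : sbr p q 0 y = 0 := by
  simp [sbr]

lemma sbr_zero_right (p q : Bool) (x : Y) : sbr p q x 0 = 0 := by
  simp [sbr]

lemma sbr_skew (p q : Bool) (x y : Y) : sbr p q x y = (-sg p q) • sbr q p y x := by
  cases p <;> cases q <;> simp [sbr, sg, add_comm]

lemma sbr_eq_zero_symm {p q : Bool} {x y : Y} (h : sbr p q x y = 0) : sbr q p y x = 0 := by
  rw [sbr_skew, h, smul_zero]

lemma sbr_jacobi (p q r : Bool) (x y z : Y) :
    sbr p (xor q r) x (sbr q r y z) =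
      sbr (xor p q) r (sbr p q x y) z + sg p q • sbr q (xor p r) y (sbr p r x z) := by
  cases p <;> cases q <;> cases r <;>
    simp only [sbr, sg, bne_self_eq_false, Bool.bne_true, Bool.bne_false, Bool.not_false,
      Bool.and_self, Bool.and_true, Bool.and_false, Bool.false_eq_true, if_true, if_false,
      one_smul, neg_smul] <;>
    noncomm_ring

/-- The left-hand side `[[a, b], [b, d]]` of the odd Serre relation, for `a`, `b`, `d` of
parities `pa`, `pb`, `pd`. -/
def oddSerreBr (pa pb pd : Bool) (a b d : Y) : Y :=
  sbr (xor pa pb) (xor pb pd) (sbr pa pb a b) (sbr pb pd b d)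

lemma oddSerreBr_smul_left (pa pb pd : Bool) (s : R) (a b d : Y) :
    oddSerreBr pa pb pd (s • a) b d = s • oddSerreBr pa pb pd a b d := by
  simp only [oddSerreBr, sbr_smul_left]

lemma oddSerreBr_smul_right (pa pb pd : Bool) (s : R) (a b d : Y) :
    oddSerreBr pa pb pd a b (s • d) = s • oddSerreBr pa pb pd a b d := by
  simp only [oddSerreBr, sbr_smul_right]

lemma oddSerreBr_smul_mid (pa pb pd : Bool) (s : R) (a b d : Y) :
    oddSerreBr pa pb pd a (s • b) d = (s * s) • oddSerreBr pa pb pd a b d := by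
  simp only [oddSerreBr, sbr_smul_left, sbr_smul_right, mul_smul]

lemma oddSerreBr_eq_zero_symm {pa pb pd : Bool} {a b d : Y} (h : oddSerreBr pa pb pd a b d = 0) :
    oddSerreBr pd pb pa d b a = 0 := by
  have h' := sbr_eq_zero_symm h
  rw [sbr_skew pb pd, sbr_skew pa pb, sbr_smul_left, sbr_smul_right, smul_smul,
    Bool.xor_comm pb pd, Bool.xor_comm pa pb] at h'
  have hunit : IsUnit (-sg pb pd * -sg pa pb) := by
    cases pa <;> cases pb <;> cases pd <;> simp [sg]
  exact hunit.smul_eq_zero.1 h'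

lemma sbr_sbr_eq_zero_of_sbr_self {p : Bool} {b d : Y} (hb : sbr true true b b = 0) :
    sbr true (xor true p) b (sbr true p b d) = 0 := by
  have h := sbr_jacobi true true p b b d
  rw [hb, sbr_zero_left, zero_add] at h
  refine eq_zero_of_add_self_eq_zero ?_
  nth_rw 1 [h]
  simp [sg]

/-- As `[a, d] = 0` and `(ad b)² a = (ad b)² d = 0`, the Leibniz rule turns `(ad b)² [a, d] = 0`
into `2 [[b, a], [b, d]] = 0`. -/
lemma oddSerreBr_eq_zero_of_even {pa pd : Bool} {a b d : Y} (had : sbr pa pd a d = 0)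
    (hba : sbr false pa b (sbr false pa b a) = 0)
    (hbd : sbr false pd b (sbr false pd b d) = 0) :
    oddSerreBr pa false pd a b d = 0 := by
  have leibniz (p q : Bool) (u v : Y) : sbr false (xor p q) b (sbr p q u v) =
      sbr p q (sbr false p b u) v + sbr p q u (sbr false q b v) := by
    simpa [sg] using sbr_jacobi false p q b u v
  have h1 : sbr pa pd (sbr false pa b a) d + sbr pa pd a (sbr false pd b d) = 0 := by
    rw [← leibniz, had, sbr_zero_right]
  have h2 : sbr false (xor pa pd) b
      (sbr pa pd (sbr false pa b a) d + sbr pa pd a (sbr false pd b d)) = 0 := by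
    rw [h1, sbr_zero_right]
  have sbr_add (u v : Y) : sbr false (xor pa pd) b (u + v) =
      sbr false (xor pa pd) b u + sbr false (xor pa pd) b v := by
    simp only [sbr, mul_add, add_mul, smul_add]
    abel
  rw [sbr_add, leibniz, leibniz, hba, hbd, sbr_zero_left, sbr_zero_right, zero_add, add_zero] at h2
  rw [oddSerreBr, sbr_skew pa false, Bool.xor_false, Bool.false_xor, sbr_smul_left,
    eq_zero_of_add_self_eq_zero h2, smul_zero]

/-- `ad a` kills `[[b, d], b]`, and in the expansion the odd Serre relation removes the term
`[[b, d], [a, b]]`. -/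
lemma sbr_sbr_sbr_eq_zero_of_oddSerreBr {pa pb pd : Bool} {a b d : Y}
    (hbd : sbr pb (xor pb pd) b (sbr pb pd b d) = 0) (hS : oddSerreBr pa pb pd a b d = 0) :
    sbr (xor pa (xor pb pd)) pb (sbr pa (xor pb pd) a (sbr pb pd b d)) b = 0 := by
  have h := sbr_jacobi pa (xor pb pd) pb a (sbr pb pd b d) b
  rwa [sbr_eq_zero_symm hbd, sbr_zero_right, sbr_eq_zero_symm hS, smul_zero, add_zero,
    eq_comm] at h

lemma exists_sbr_sbr_eq_smul {p r : Bool} {a x y : Y} (hay : sbr p r a y = 0)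
    (hw : ∃ s : R, sbr false p (sbr r r x y) a = s • a) :
    ∃ s : R, sbr (xor p r) r (sbr p r a x) y = s • a := by
  obtain ⟨s, hs⟩ := hw
  refine ⟨-s, ?_⟩
  have h := sbr_jacobi p r r a x y
  rw [hay, sbr_zero_right, smul_zero, add_zero, Bool.xor_self, sbr_skew, hs] at h
  rw [← h]
  simp [sg]

/-- Both inner brackets are multiples of `a` and `d`. -/
lemma oddSerreBr_sbr_sbr_eq_zero {pa pd r : Bool} {a d x y : Y} (had : sbr pa pd a d = 0)
    (hay : sbr pa r a y = 0) (hdy : sbr pd r d y = 0)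
    (hwa : ∃ s : R, sbr false pa (sbr r r x y) a = s • a)
    (hwd : ∃ s : R, sbr false pd (sbr r r x y) d = s • d) :
    oddSerreBr (xor pa r) r (xor pd r) (sbr pa r a x) y (sbr pd r d x) = 0 := by
  obtain ⟨s, hs⟩ := exists_sbr_sbr_eq_smul hay hwa
  obtain ⟨s', hs'⟩ := exists_sbr_sbr_eq_smul hdy hwd
  rw [oddSerreBr, hs, sbr_skew r, hs', Bool.xor_comm r (xor pd r)]
  simp only [sbr_smul_left, sbr_smul_right, Bool.xor_assoc, Bool.xor_self, Bool.xor_false, had,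
    smul_zero]

/-- The inner bracket `[[b, x], y]` is a multiple of `b`. -/
lemma oddSerreBr_sbr_dual_eq_zero {pb pf r : Bool} {b f x y : Y} (hby : sbr pb r b y = 0)
    (hw : ∃ s : R, sbr false pb (sbr r r x y) b = s • b)
    (hfb : sbr (xor pf (xor pb r)) pb (sbr pf (xor pb r) f (sbr pb r b x)) b = 0) :
    oddSerreBr pf (xor pb r) r f (sbr pb r b x) y = 0 := by
  obtain ⟨s, hs⟩ := exists_sbr_sbr_eq_smul hby hw
  rw [oddSerreBr, hs, sbr_smul_right, Bool.xor_assoc pb r r]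
  simp [hfb]

/-- `ad d` passes through both brackets, since `d` commutes with `a` and `b`. -/
lemma oddSerreBr_sbr_right_eq_zero {pa pb pd pf : Bool} {a b d f : Y} (had : sbr pa pd a d = 0)
    (hbd : sbr pb pd b d = 0) (hS : oddSerreBr pa pb pf a b f = 0) :
    oddSerreBr pa pb (xor pf pd) a b (sbr pf pd f d) = 0 := by
  have hbfd := sbr_jacobi pb pf pd b f d
  rw [hbd, sbr_zero_right, smul_zero, add_zero] at hbfd
  have habd : sbr (xor pa pb) pd (sbr pa pb a b) d = 0 := by
    have h := sbr_jacobi pa pb pd a b d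
    rwa [had, hbd, sbr_zero_right, sbr_zero_right, smul_zero, add_zero, eq_comm] at h
  have h := sbr_jacobi (xor pa pb) (xor pb pf) pd (sbr pa pb a b) (sbr pb pf b f) d
  rw [habd, sbr_zero_right, smul_zero, add_zero, show sbr _ _ _ _ = _ from hS, sbr_zero_left] at h
  rw [oddSerreBr, hbfd, ← Bool.xor_assoc, h]

end Superbracket

section CyclicAdj

variable {N : ℕ} [NeZero N]

/-- Adjacency of nodes in the Dynkin diagram, which is an `N`-cycle. -/
def CyclicAdj (i j : Fin N) : Prop := j = i + 1 ∨ i = j + 1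

instance (i j : Fin N) : Decidable (CyclicAdj i j) :=
  inferInstanceAs (Decidable (_ ∨ _))

lemma CyclicAdj.symm {i j : Fin N} (h : CyclicAdj i j) : CyclicAdj j i := Or.symm h

lemma cyclicAdj_add_one (i : Fin N) : CyclicAdj i (i + 1) := Or.inl rfl

lemma cyclicAdj_sub_one (i : Fin N) : CyclicAdj i (i - 1) := Or.inr (by grind)

lemma cyclicAdj_iff_eq_sub_one_or_eq_add_one {i j : Fin N} :
    CyclicAdj i j ↔ j = i - 1 ∨ j = i + 1 := by
  unfold CyclicAdj
  grind

lemma ofNat_ne_zero_of_lt {k : ℕ} [NeZero k] (hk : k < N) : Fin.ofNat N k ≠ 0 := by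
  simp [Fin.ext_iff, Nat.mod_eq_of_lt hk, NeZero.ne k]

lemma CyclicAdj.ne (hN : 2 ≤ N) {i j : Fin N} (h : CyclicAdj i j) : i ≠ j := by
  have h1 : (1 : Fin N) ≠ 0 := ofNat_ne_zero_of_lt (k := 1) (by omega)
  unfold CyclicAdj at h
  grind

lemma ne_add_one_add_one (hN : 3 ≤ N) (i : Fin N) : i ≠ i + 1 + 1 := by
  have h2 : (2 : Fin N) ≠ 0 := ofNat_ne_zero_of_lt (k := 2) (by omega)
  have h11 : (1 + 1 : Fin N) = 2 := by grind
  rwa [ne_eq, add_assoc, left_eq_add, h11]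

lemma sub_one_ne_add_one (hN : 3 ≤ N) (i : Fin N) : i - 1 ≠ i + 1 := by
  simpa using ne_add_one_add_one hN (i - 1)

lemma CyclicAdj.eq_or_eq {t i k c : Fin N} (hi : CyclicAdj t i) (hk : CyclicAdj t k)
    (hik : i ≠ k) (hc : CyclicAdj t c) : i = c ∨ k = c := by
  unfold CyclicAdj at hi hk hc
  grind

lemma CyclicAdj.not_cyclicAdj (hN : 4 ≤ N) {t i k : Fin N} (hi : CyclicAdj t i)
    (hk : CyclicAdj t k) : ¬ CyclicAdj i k := by
  have h3 : (3 : Fin N) ≠ 0 := ofNat_ne_zero_of_lt (k := 3) (by omega)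
  unfold CyclicAdj at hi hk ⊢
  grind

lemma CyclicAdj.eq_of_cyclicAdj_of_cyclicAdj (hN : 5 ≤ N) {t c i k : Fin N} (hik : i ≠ k)
    (hti : CyclicAdj t i) (htk : CyclicAdj t k) (hci : CyclicAdj c i) (hck : CyclicAdj c k) :
    t = c := by
  have h4 : (4 : Fin N) ≠ 0 := ofNat_ne_zero_of_lt (k := 4) (by omega)
  unfold CyclicAdj at hti htk hci hck
  grind

end CyclicAdj

section Cartan

variable {m n : ℕ} [NeZero (m + n)] (P : SimpleRootSystem m n)

lemma a_eq_coeffα (i j : Fin (m + n)) :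
    P.a i j = P.w i * SimpleRootSystem.coeffα j i -
      P.w (i + 1) * SimpleRootSystem.coeffα j (i + 1) := by
  have h : ∀ k, P.w k * SimpleRootSystem.coeffα i k * SimpleRootSystem.coeffα j k =
      (if k = i then P.w k * SimpleRootSystem.coeffα j k else 0) -
        (if k = i + 1 then P.w k * SimpleRootSystem.coeffα j k else 0) := by
    intro k
    rw [SimpleRootSystem.coeffα]
    split_ifs <;> ring
  simp [SimpleRootSystem.a, h, Finset.sum_sub_distrib]

lemma a_comm (i j : Fin (m + n)) : P.a i j = P.a j i := by
  simp only [SimpleRootSystem.a, mul_right_comm]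

lemma a_eq_zero {i j : Fin (m + n)} (hij : i ≠ j) (h : ¬ CyclicAdj i j) : P.a i j = 0 := by
  simp only [CyclicAdj, not_or] at h
  simp [a_eq_coeffα, SimpleRootSystem.coeffα, hij, h.2, Ne.symm h.1]

lemma natAbs_a_eq_one (hN : 3 ≤ m + n) {i j : Fin (m + n)} (h : CyclicAdj i j) :
    (P.a i j).natAbs = 1 := by
  wlog hj : j = i + 1 generalizing i j
  · rw [a_comm]
    exact this h.symm (h.resolve_left hj)
  subst hj
  have h1 := (cyclicAdj_add_one i).ne (by omega)
  have h2 := (cyclicAdj_add_one (i + 1)).ne (by omega)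
  have h3 := ne_add_one_add_one hN i
  rw [a_eq_coeffα]
  simp only [SimpleRootSystem.coeffα, SimpleRootSystem.w, if_neg h1, if_neg h2, if_neg h3]
  split_ifs <;> simp

lemma par_reflect_self (c : Fin (m + n)) : (P.reflect c).par c = P.par c := by
  simp [SimpleRootSystem.par, SimpleRootSystem.reflect, bne_comm]

lemma par_reflect_of_cyclicAdj (hN : 3 ≤ m + n) {c j : Fin (m + n)} (h : CyclicAdj c j) :
    (P.reflect c).par j = xor (P.par j) (P.par c) := by
  have hne := h.ne (by omega)
  rcases h with rfl | rfl
  · have h1 := (ne_add_one_add_one hN c).symm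
    have h2 := ((cyclicAdj_add_one (c + 1)).ne (by omega)).symm
    simp only [SimpleRootSystem.par, SimpleRootSystem.reflect, Function.comp,
      Equiv.swap_apply_right, Equiv.swap_apply_of_ne_of_ne h1 h2]
    cases P.τ c <;> cases P.τ (c + 1) <;> cases P.τ (c + 1 + 1) <;> rfl
  · have h1 := ne_add_one_add_one hN j
    simp only [SimpleRootSystem.par, SimpleRootSystem.reflect, Function.comp,
      Equiv.swap_apply_left, Equiv.swap_apply_of_ne_of_ne hne.symm h1]
    cases P.τ j <;> cases P.τ (j + 1) <;> cases P.τ (j + 1 + 1) <;> rfl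

lemma par_reflect_of_not_cyclicAdj {c j : Fin (m + n)} (hj : j ≠ c) (h : ¬ CyclicAdj c j) :
    (P.reflect c).par j = P.par j := by
  simp only [CyclicAdj, not_or] at h
  have h1 : j + 1 ≠ c + 1 := fun h' => hj (add_right_cancel h')
  simp only [SimpleRootSystem.par, SimpleRootSystem.reflect, Function.comp,
    Equiv.swap_apply_of_ne_of_ne (Ne.symm h.2) h1, Equiv.swap_apply_of_ne_of_ne hj h.1]

end Cartan

section ChevalleyPair

variable {m n : ℕ} [NeZero (m + n)] {Y : Type*} [Ring Y] [Algebra R Y]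

/-- The relations of `ŝl(m|n,Π)` that hold for both `(x, y) = (x^+, x^-)` and `(x, y) = (x^-, x^+)`,
so that the two signs can be treated at once. The Cartan generators enter only through the action
of `[x_i, y_i] = ±h_i` on `x`. -/
structure IsChevalleyPair (P : SimpleRootSystem m n) (x y : Fin (m + n) → Y) : Prop where
  serre : ∀ i j, i ≠ j → adN (P.par i) (P.par j) (x i) (1 + (P.a i j).natAbs) (x j) = 0
  sbr_self : ∀ t, P.par t = true → sbr true true (x t) (x t) = 0
  odd_serre : ∀ t, P.par t = true →
    oddSerreBr (P.par (t - 1)) true (P.par (t + 1)) (x (t - 1)) (x t) (x (t + 1)) = 0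
  sbr_of_ne : ∀ i j, i ≠ j → sbr (P.par i) (P.par j) (x i) (y j) = 0
  weight : ∀ i j, ∃ s : R,
    sbr false (P.par j) (sbr (P.par i) (P.par i) (x i) (y i)) (x j) = s • x j

lemma mkK_eq_of_kRel (P : SimpleRootSystem m n) {u v : KFree m n} (h : KRel P u v) :
    mkK P u = mkK P v :=
  RingQuot.mkAlgHom_rel R h

lemma mkK_sbr (P : SimpleRootSystem m n) (p q : Bool) (u v : KFree m n) :
    mkK P (sbr p q u v) = sbr p q (mkK P u) (mkK P v) := by
  simp only [sbr, map_sub, map_smul, map_mul]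

lemma mkK_adN (P : SimpleRootSystem m n) (p q : Bool) (u v : KFree m n) (k : ℕ) :
    mkK P (adN p q u k v) = adN p q (mkK P u) k (mkK P v) := by
  induction k with
  | zero => rfl
  | succ k ih => rw [adN, adN, mkK_sbr, ih]

lemma sbr_kxp_kxm (P : SimpleRootSystem m n) (i j : Fin (m + n)) :
    sbr (P.par i) (P.par j) (kxp P i) (kxm P j) = if i = j then kh P i else 0 := by
  simpa only [mkK_sbr, apply_ite (mkK P), map_zero, kxp, kxm, kh] using
    mkK_eq_of_kRel P (KRel.pm i j)

lemma isChevalleyPair_kxp_kxm (P : SimpleRootSystem m n) :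
    IsChevalleyPair P (kxp P) (kxm P) where
  serre i j hij := by
    simpa only [mkK_adN, map_zero, kxp] using mkK_eq_of_kRel P (KRel.serrep i j hij)
  sbr_self t ht := by simpa only [mkK_sbr, map_zero, kxp] using mkK_eq_of_kRel P (KRel.oddp t ht)
  odd_serre t ht := by
    simpa only [mkK_sbr, map_zero, oddSerreBr, kxp] using mkK_eq_of_kRel P (KRel.oddSp t ht)
  sbr_of_ne i j hij := by rw [sbr_kxp_kxm, if_neg hij]
  weight i j := by
    rw [sbr_kxp_kxm, if_pos rfl]
    refine ⟨P.a i j, ?_⟩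
    simpa only [mkK_sbr, map_smul, kh, kxp] using mkK_eq_of_kRel P (KRel.hxp i j)

lemma isChevalleyPair_kxm_kxp (P : SimpleRootSystem m n) :
    IsChevalleyPair P (kxm P) (kxp P) where
  serre i j hij := by
    simpa only [mkK_adN, map_zero, kxm] using mkK_eq_of_kRel P (KRel.serrem i j hij)
  sbr_self t ht := by simpa only [mkK_sbr, map_zero, kxm] using mkK_eq_of_kRel P (KRel.oddm t ht)
  odd_serre t ht := by
    simpa only [mkK_sbr, map_zero, oddSerreBr, kxm] using mkK_eq_of_kRel P (KRel.oddSm t ht)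
  sbr_of_ne i j hij := sbr_eq_zero_symm (by rw [sbr_kxp_kxm, if_neg hij.symm])
  weight i j := by
    have h : sbr false (P.par j) (kh P i) (kxm P j) = (-(P.a i j : ℤ) : R) • kxm P j := by
      simpa only [mkK_sbr, map_smul, kh, kxm] using mkK_eq_of_kRel P (KRel.hxm i j)
    rw [sbr_skew (P.par i), sbr_kxp_kxm, if_pos rfl, sbr_smul_left, h, smul_smul]
    exact ⟨_, rfl⟩

namespace IsChevalleyPair

variable {P : SimpleRootSystem m n} {x y : Fin (m + n) → Y} (H : IsChevalleyPair P x y)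

include H

lemma sbr_eq_zero {i j : Fin (m + n)} (hij : i ≠ j) (h : ¬ CyclicAdj i j) :
    sbr (P.par i) (P.par j) (x i) (x j) = 0 := by
  simpa [a_eq_zero P hij h, adN] using H.serre i j hij

lemma sbr_sbr_eq_zero (hN : 3 ≤ m + n) {i j : Fin (m + n)} (h : CyclicAdj i j) :
    sbr (P.par i) (xor (P.par i) (P.par j)) (x i) (sbr (P.par i) (P.par j) (x i) (x j)) = 0 := by
  cases hi : P.par i
  · simpa [natAbs_a_eq_one P hN h, adN, hi] using H.serre i j (h.ne (by omega))
  · exact sbr_sbr_eq_zero_of_sbr_self (H.sbr_self i hi)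

lemma oddSerreBr_eq_zero (hN : 4 ≤ m + n) {i t k : Fin (m + n)} (hi : CyclicAdj t i)
    (hk : CyclicAdj t k) (hik : i ≠ k) :
    oddSerreBr (P.par i) (P.par t) (P.par k) (x i) (x t) (x k) = 0 := by
  cases ht : P.par t
  · have hti := H.sbr_sbr_eq_zero (by omega) hi
    have htk := H.sbr_sbr_eq_zero (by omega) hk
    simp only [ht, Bool.false_xor] at hti htk
    exact oddSerreBr_eq_zero_of_even (H.sbr_eq_zero hik (hi.not_cyclicAdj hN hk)) hti htk
  · have hodd := H.odd_serre t ht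
    rcases cyclicAdj_iff_eq_sub_one_or_eq_add_one.1 hi with rfl | rfl <;>
      rcases cyclicAdj_iff_eq_sub_one_or_eq_add_one.1 hk with rfl | rfl
    exacts [absurd rfl hik, hodd, oddSerreBr_eq_zero_symm hodd, absurd rfl hik]

lemma sbr_sbr_sbr_eq_zero (hN : 4 ≤ m + n) {i t k : Fin (m + n)} (hi : CyclicAdj t i)
    (hk : CyclicAdj t k) (hik : i ≠ k) :
    sbr (xor (P.par i) (xor (P.par t) (P.par k))) (P.par t)
      (sbr (P.par i) (xor (P.par t) (P.par k)) (x i) (sbr (P.par t) (P.par k) (x t) (x k)))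
      (x t) = 0 :=
  sbr_sbr_sbr_eq_zero_of_oddSerreBr (H.sbr_sbr_eq_zero (by omega) hk)
    (H.oddSerreBr_eq_zero hN hi hk hik)

end IsChevalleyPair

end ChevalleyPair

section Reflection

variable {m n : ℕ} [NeZero (m + n)] {Y : Type*} [Ring Y] [Algebra R Y]

/-- The image under `φ` of the generator `x_{β_j}` of `ŝl(m|n,Π₁)`, uniformly in the sign `±`:
`(x, y) = (x^±, x^∓)` and `e = ±1`. -/
def reflectGen (P : SimpleRootSystem m n) (c : Fin (m + n)) (e : R) (x y : Fin (m + n) → Y)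
    (j : Fin (m + n)) : Y :=
  if j = c then y c
  else if CyclicAdj c j then e • sbr (P.par j) (P.par c) (x j) (x c)
  else x j

section

variable (P : SimpleRootSystem m n) {c : Fin (m + n)} (e : R) (x y : Fin (m + n) → Y)

lemma reflectGen_self : reflectGen P c e x y c = y c := if_pos rfl

lemma reflectGen_of_cyclicAdj (hN : 2 ≤ m + n) {j : Fin (m + n)} (h : CyclicAdj c j) :
    reflectGen P c e x y j = e • sbr (P.par j) (P.par c) (x j) (x c) := by
  rw [reflectGen, if_neg (h.ne hN).symm, if_pos h]

lemma reflectGen_of_not_cyclicAdj {j : Fin (m + n)} (hj : j ≠ c) (h : ¬ CyclicAdj c j) :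
    reflectGen P c e x y j = x j := by
  rw [reflectGen, if_neg hj, if_neg h]

end

lemma ite_eq_ite_cyclicAdj {Z : Type*} {N : ℕ} [NeZero N] (c j : Fin N) (f : Fin N → Z) (z : Z) :
    (if j = c - 1 then f (c - 1) else if j = c + 1 then f (c + 1) else z) =
      if CyclicAdj c j then f j else z := by
  rw [if_congr cyclicAdj_iff_eq_sub_one_or_eq_add_one rfl rfl]
  grind

lemma phiXp_eq_reflectGen (P : SimpleRootSystem m n) {c : Fin (m + n)} (hc : P.par c = true)
    (j : Fin (m + n)) : phiXp P c j = reflectGen P c 1 (kxp P) (kxm P) j := by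
  simp only [phiXp, reflectGen, hc, one_smul]
  rw [ite_eq_ite_cyclicAdj c j fun j => sbr (P.par j) true (kxp P j) (kxp P c)]

lemma phiXm_eq_reflectGen (P : SimpleRootSystem m n) {c : Fin (m + n)} (hc : P.par c = true)
    (j : Fin (m + n)) : phiXm P c j = reflectGen P c (-1) (kxm P) (kxp P) j := by
  simp only [phiXm, reflectGen, hc]
  rw [ite_eq_ite_cyclicAdj c j fun j => -sbr (P.par j) true (kxm P j) (kxm P c)]
  split_ifs
  · rfl
  · exact (neg_one_smul R (sbr (P.par j) true (kxm P j) (kxm P c))).symm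
  · rfl

namespace IsChevalleyPair

variable {P : SimpleRootSystem m n} {x y : Fin (m + n) → Y} (H : IsChevalleyPair P x y)

include H

lemma oddSerreBr_dual_eq_zero (hN : 4 ≤ m + n) {i c k : Fin (m + n)} (hi : CyclicAdj c i)
    (hk : CyclicAdj c k) (hik : i ≠ k) :
    oddSerreBr (xor (P.par i) (P.par c)) (P.par c) (xor (P.par k) (P.par c))
      (sbr (P.par i) (P.par c) (x i) (x c)) (y c) (sbr (P.par k) (P.par c) (x k) (x c)) = 0 :=
  oddSerreBr_sbr_sbr_eq_zero (H.sbr_eq_zero hik (hi.not_cyclicAdj hN hk))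
    (H.sbr_of_ne i c (hi.ne (by omega)).symm) (H.sbr_of_ne k c (hk.ne (by omega)).symm)
    (H.weight c i) (H.weight c k)

lemma oddSerreBr_sbr_dual_eq_zero (hN : 4 ≤ m + n) {i t c : Fin (m + n)} (hi : CyclicAdj t i)
    (hc : CyclicAdj t c) (hic : i ≠ c) :
    oddSerreBr (P.par i) (xor (P.par t) (P.par c)) (P.par c)
      (x i) (sbr (P.par t) (P.par c) (x t) (x c)) (y c) = 0 :=
  ASY.oddSerreBr_sbr_dual_eq_zero (H.sbr_of_ne t c (hc.ne (by omega))) (H.weight c t)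
    (H.sbr_sbr_sbr_eq_zero hN hi hc hic)

lemma oddSerreBr_sbr_eq_zero (hN : 5 ≤ m + n) {i t k c : Fin (m + n)} (hi : CyclicAdj t i)
    (hk : CyclicAdj t k) (hik : i ≠ k) (hck : CyclicAdj c k) (htc : t ≠ c) :
    oddSerreBr (P.par i) (P.par t) (xor (P.par k) (P.par c))
      (x i) (x t) (sbr (P.par k) (P.par c) (x k) (x c)) = 0 := by
  have htc' : ¬ CyclicAdj t c := hk.symm.not_cyclicAdj (by omega) hck.symm
  have hic : i ≠ c := fun h => htc' (h ▸ hi)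
  have hic' : ¬ CyclicAdj i c := fun h =>
    htc (hi.eq_of_cyclicAdj_of_cyclicAdj hN hik hk h.symm hck)
  exact oddSerreBr_sbr_right_eq_zero (H.sbr_eq_zero hic hic') (H.sbr_eq_zero htc htc')
    (H.oddSerreBr_eq_zero (by omega) hi hk hik)

lemma oddSerreBr_reflectGen_self_eq_zero (hN : 4 ≤ m + n) {i c k : Fin (m + n)} (e : R)
    (hi : CyclicAdj c i) (hk : CyclicAdj c k) (hik : i ≠ k) :
    oddSerreBr ((P.reflect c).par i) ((P.reflect c).par c) ((P.reflect c).par k)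
      (reflectGen P c e x y i) (reflectGen P c e x y c) (reflectGen P c e x y k) = 0 := by
  rw [par_reflect_self, par_reflect_of_cyclicAdj P (by omega) hi,
    par_reflect_of_cyclicAdj P (by omega) hk, reflectGen_self,
    reflectGen_of_cyclicAdj P e x y (by omega) hi, reflectGen_of_cyclicAdj P e x y (by omega) hk,
    oddSerreBr_smul_left, oddSerreBr_smul_right, H.oddSerreBr_dual_eq_zero hN hi hk hik,
    smul_zero, smul_zero]

lemma oddSerreBr_reflectGen_eq_zero_of_cyclicAdj (hN : 4 ≤ m + n) {i t c : Fin (m + n)} (e : R)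
    (hi : CyclicAdj t i) (hc : CyclicAdj t c) (hic : i ≠ c) :
    oddSerreBr ((P.reflect c).par i) ((P.reflect c).par t) ((P.reflect c).par c)
      (reflectGen P c e x y i) (reflectGen P c e x y t) (reflectGen P c e x y c) = 0 := by
  have hic' : ¬ CyclicAdj c i := hc.not_cyclicAdj hN hi
  rw [par_reflect_self, par_reflect_of_cyclicAdj P (by omega) hc.symm,
    par_reflect_of_not_cyclicAdj P hic hic', reflectGen_self,
    reflectGen_of_cyclicAdj P e x y (by omega) hc.symm,
    reflectGen_of_not_cyclicAdj P e x y hic hic', oddSerreBr_smul_mid,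
    H.oddSerreBr_sbr_dual_eq_zero hN hi hc hic, smul_zero]

lemma oddSerreBr_reflectGen_eq_zero_of_cyclicAdj_right (hN : 5 ≤ m + n)
    {i t k c : Fin (m + n)} (e : R) (hi : CyclicAdj t i) (hk : CyclicAdj t k) (hik : i ≠ k)
    (hck : CyclicAdj c k) (htc : t ≠ c) :
    oddSerreBr ((P.reflect c).par i) ((P.reflect c).par t) ((P.reflect c).par k)
      (reflectGen P c e x y i) (reflectGen P c e x y t) (reflectGen P c e x y k) = 0 := by
  have hct : ¬ CyclicAdj c t := hck.symm.not_cyclicAdj (by omega) hk.symm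
  have hic : i ≠ c := fun h => hct (h ▸ hi.symm)
  have hci : ¬ CyclicAdj c i := fun h => htc (hi.eq_of_cyclicAdj_of_cyclicAdj hN hik hk h hck)
  rw [par_reflect_of_not_cyclicAdj P htc hct, par_reflect_of_not_cyclicAdj P hic hci,
    par_reflect_of_cyclicAdj P (by omega) hck, reflectGen_of_not_cyclicAdj P e x y htc hct,
    reflectGen_of_not_cyclicAdj P e x y hic hci, reflectGen_of_cyclicAdj P e x y (by omega) hck,
    oddSerreBr_smul_right, H.oddSerreBr_sbr_eq_zero hN hi hk hik hck htc, smul_zero]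

theorem oddSerreBr_reflectGen_eq_zero (hN : 5 ≤ m + n) {i t k c : Fin (m + n)} (e : R)
    (hi : CyclicAdj t i) (hk : CyclicAdj t k) (hik : i ≠ k) :
    oddSerreBr ((P.reflect c).par i) ((P.reflect c).par t) ((P.reflect c).par k)
      (reflectGen P c e x y i) (reflectGen P c e x y t) (reflectGen P c e x y k) = 0 := by
  rcases eq_or_ne t c with rfl | htc
  · exact H.oddSerreBr_reflectGen_self_eq_zero (by omega) e hi hk hik
  by_cases hct : CyclicAdj c t
  · rcases hi.eq_or_eq hk hik hct.symm with rfl | rfl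
    · exact oddSerreBr_eq_zero_symm
        (H.oddSerreBr_reflectGen_eq_zero_of_cyclicAdj (by omega) e hk hi hik.symm)
    · exact H.oddSerreBr_reflectGen_eq_zero_of_cyclicAdj (by omega) e hi hk hik
  by_cases hck : CyclicAdj c k
  · exact H.oddSerreBr_reflectGen_eq_zero_of_cyclicAdj_right hN e hi hk hik hck htc
  by_cases hci : CyclicAdj c i
  · exact oddSerreBr_eq_zero_symm
      (H.oddSerreBr_reflectGen_eq_zero_of_cyclicAdj_right hN e hk hi hik.symm hci htc)
  have hic : i ≠ c := fun h => hct (h ▸ hi.symm)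
  have hkc : k ≠ c := fun h => hct (h ▸ hk.symm)
  rw [par_reflect_of_not_cyclicAdj P htc hct, par_reflect_of_not_cyclicAdj P hic hci,
    par_reflect_of_not_cyclicAdj P hkc hck, reflectGen_of_not_cyclicAdj P e x y htc hct,
    reflectGen_of_not_cyclicAdj P e x y hic hci, reflectGen_of_not_cyclicAdj P e x y hkc hck]
  exact H.oddSerreBr_eq_zero (by omega) hi hk hik

lemma sbr_sbr_dual_sbr_dual_eq_zero (hN : 4 ≤ m + n) {i c k : Fin (m + n)} (hi : CyclicAdj c i)
    (hk : CyclicAdj c k) (hik : i ≠ k) :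
    sbr (P.par i) (P.par k)
      (sbr (xor (P.par i) (P.par c)) (P.par c) (sbr (P.par i) (P.par c) (x i) (x c)) (y c))
      (sbr (P.par c) (xor (P.par c) (P.par k)) (y c)
        (sbr (P.par c) (P.par k) (x c) (x k))) = 0 := by
  have h := H.oddSerreBr_dual_eq_zero hN hi hk hik
  rw [oddSerreBr, Bool.xor_comm (P.par k) (P.par c), Bool.xor_assoc, Bool.xor_self, Bool.xor_false,
    ← Bool.xor_assoc, Bool.xor_self, Bool.false_xor] at h
  rw [sbr_skew (P.par c) (P.par k), sbr_smul_right, sbr_smul_right, h, smul_zero]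

lemma sbr_sbr_sbr_dual_eq_zero (hN : 4 ≤ m + n) {i t c : Fin (m + n)} (hi : CyclicAdj t i)
    (hc : CyclicAdj t c) (hic : i ≠ c) :
    sbr (xor (P.par i) (xor (P.par t) (P.par c))) (P.par t)
      (sbr (P.par i) (xor (P.par t) (P.par c)) (x i) (sbr (P.par t) (P.par c) (x t) (x c)))
      (sbr (xor (P.par t) (P.par c)) (P.par c) (sbr (P.par t) (P.par c) (x t) (x c)) (y c)) =
        0 := by
  simpa [oddSerreBr] using H.oddSerreBr_sbr_dual_eq_zero hN hi hc hic

end IsChevalleyPair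

end Reflection

theorem phi_odd_serre_relations_general (m n : ℕ) [NeZero (m + n)]
    (hN : 5 ≤ m + n) (P : SimpleRootSystem m n) (c : Fin (m + n)) (hodd : P.par c = true) :
    (∀ t : Fin (m + n),
      (let q := (P.reflect c).par
       sbr (xor (q (t - 1)) (q t)) (xor (q t) (q (t + 1)))
         (sbr (q (t - 1)) (q t) (phiXp P c (t - 1)) (phiXp P c t))
         (sbr (q t) (q (t + 1)) (phiXp P c t) (phiXp P c (t + 1))) = 0 ∧
       sbr (xor (q (t - 1)) (q t)) (xor (q t) (q (t + 1)))
         (sbr (q (t - 1)) (q t) (phiXm P c (t - 1)) (phiXm P c t))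
         (sbr (q t) (q (t + 1)) (phiXm P c t) (phiXm P c (t + 1))) = 0)) ∧
    (let pA := xor (P.par (c - 1)) true
     let Ap := sbr (P.par (c - 1)) true (kxp P (c - 1)) (kxp P c)
     let Am := sbr (P.par (c - 1)) true (kxm P (c - 1)) (kxm P c)
     let Bp := sbr pA true Ap (kxm P c)
     let Bm := sbr pA true Am (kxp P c)
     let pD := xor true (P.par (c + 1))
     let Dp := sbr true (P.par (c + 1)) (kxp P c) (kxp P (c + 1))
     let Dm := sbr true (P.par (c + 1)) (kxm P c) (kxm P (c + 1))
     let Ep := sbr true pD (kxm P c) Dp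
     let Em := sbr true pD (kxp P c) Dm
     sbr (P.par (c - 1)) (P.par (c + 1)) Bp Ep = 0 ∧
     sbr (P.par (c - 1)) (P.par (c + 1)) Bm Em = 0 ∧
     (let pF := xor (P.par (c - 2)) pA
      sbr pF (P.par (c - 1)) (sbr (P.par (c - 2)) pA (kxp P (c - 2)) Ap) Bp = 0 ∧
      sbr pF (P.par (c - 1)) (sbr (P.par (c - 2)) pA (kxm P (c - 2)) Am) Bm = 0)) := by
  have Hp := isChevalleyPair_kxp_kxm P
  have Hm := isChevalleyPair_kxm_kxp P
  have hpred := cyclicAdj_sub_one (N := m + n)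
  have hsucc := cyclicAdj_add_one (N := m + n)
  have hne := sub_one_ne_add_one (N := m + n) (by omega)
  have hsub_two : c - 2 = c - 1 - 1 := by grind
  have hpred2 : CyclicAdj (c - 1) (c - 2) := hsub_two ▸ hpred (c - 1)
  have hne2 : c - 2 ≠ c := by simpa [hsub_two] using hne (c - 1)
  refine ⟨fun t => ⟨?_, ?_⟩, ?_, ?_, ?_, ?_⟩
  · simp only [phiXp_eq_reflectGen P hodd]
    exact Hp.oddSerreBr_reflectGen_eq_zero hN _ (hpred t) (hsucc t) (hne t)
  · simp only [phiXm_eq_reflectGen P hodd]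
    exact Hm.oddSerreBr_reflectGen_eq_zero hN _ (hpred t) (hsucc t) (hne t)
  · exact hodd ▸ Hp.sbr_sbr_dual_sbr_dual_eq_zero (by omega) (hpred c) (hsucc c) (hne c)
  · exact hodd ▸ Hm.sbr_sbr_dual_sbr_dual_eq_zero (by omega) (hpred c) (hsucc c) (hne c)
  · exact hodd ▸ Hp.sbr_sbr_sbr_dual_eq_zero (by omega) hpred2 (hpred c).symm hne2
  · exact hodd ▸ Hm.sbr_sbr_sbr_dual_eq_zero (by omega) hpred2 (hpred c).symm hne2

/-- With `φ` the map induced by the odd reflection at the odd simple root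
`α_c` (`c = i+1`), the odd Serre relations are preserved:
`[[φ(x^±_{β_{t−1},0}), φ(x^±_{β_t,0})], [φ(x^±_{β_t,0}), φ(x^±_{β_{t+1},0})]] = 0` in
`ŝl(m|n,Π)` for every odd simple root `β_t` of `Π₁`; in particular
`[[[x^±_{α_{c−1},0},x^±_{α_c,0}], x^∓_{α_c,0}], [x^∓_{α_c,0}, [x^±_{α_c,0},x^±_{α_{c+1},0}]]] = 0`
and
`[[x^±_{α_{c−2},0}, [x^±_{α_{c−1},0},x^±_{α_c,0}]], [[x^±_{α_{c−1},0},x^±_{α_c,0}], x^∓_{α_c,0}]] = 0`. -/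
theorem phi_odd_serre_relations (m n : ℕ) [NeZero (m + n)]
    (hm : 2 ≤ m) (hn : 2 ≤ n) (hmn : m ≠ n)
    (P : SimpleRootSystem m n) (c : Fin (m + n)) (hodd : P.par c = true) :
    (∀ t : Fin (m + n), (P.reflect c).par t = true →
      (let q := (P.reflect c).par
       sbr (xor (q (t - 1)) (q t)) (xor (q t) (q (t + 1)))
         (sbr (q (t - 1)) (q t) (phiXp P c (t - 1)) (phiXp P c t))
         (sbr (q t) (q (t + 1)) (phiXp P c t) (phiXp P c (t + 1))) = 0 ∧
       sbr (xor (q (t - 1)) (q t)) (xor (q t) (q (t + 1)))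
         (sbr (q (t - 1)) (q t) (phiXm P c (t - 1)) (phiXm P c t))
         (sbr (q t) (q (t + 1)) (phiXm P c t) (phiXm P c (t + 1))) = 0)) ∧
    (let pA := xor (P.par (c - 1)) true
     let Ap := sbr (P.par (c - 1)) true (kxp P (c - 1)) (kxp P c)
     let Am := sbr (P.par (c - 1)) true (kxm P (c - 1)) (kxm P c)
     let Bp := sbr pA true Ap (kxm P c)
     let Bm := sbr pA true Am (kxp P c)
     let pD := xor true (P.par (c + 1))
     let Dp := sbr true (P.par (c + 1)) (kxp P c) (kxp P (c + 1))
     let Dm := sbr true (P.par (c + 1)) (kxm P c) (kxm P (c + 1))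
     let Ep := sbr true pD (kxm P c) Dp
     let Em := sbr true pD (kxp P c) Dm
     sbr (P.par (c - 1)) (P.par (c + 1)) Bp Ep = 0 ∧
     sbr (P.par (c - 1)) (P.par (c + 1)) Bm Em = 0 ∧
     (let pF := xor (P.par (c - 2)) pA
      sbr pF (P.par (c - 1)) (sbr (P.par (c - 2)) pA (kxp P (c - 2)) Ap) Bp = 0 ∧
      sbr pF (P.par (c - 1)) (sbr (P.par (c - 2)) pA (kxm P (c - 2)) Am) Bm = 0)) := by
  obtain ⟨hreflect, hdisplayed⟩ := phi_odd_serre_relations_general m n (by omega) P c hodd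
  exact ⟨fun t _ => hreflect t, hdisplayed⟩

end ASY
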